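/- Let d ≥ 2, let S = {x ∈ ℝ^d : ‖x‖ = 1} be the unit sphere with uniform probability measure σ, and fix α > 0. For each integer n ≥ 1, let (u₁⁽ⁿ⁾, …, uₙ⁽ⁿ⁾) ∈ Sⁿ be a global minimizer of L_α(u) = Σ_{i=1}^n log( 1 + Σ_{j≠i} e^{α(⟨u_j, u_i⟩ − 1)} ) over all n-tuples of points of S, and let μ_n = (1/n) Σ_{i=1}^n δ_{u_i⁽ⁿ⁾} be the associated empirical probability measure. Then μ_n converges weakly to σ as n → ∞. -/

import Mathlib

open scoped RealInnerProductSpace BigOperators ENNReal Topology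
open MeasureTheory Filter

/-- The map induced on the unit sphere of `ℝ^d` by a linear isometry (rotation). -/
noncomputable def sphereRot {d : ℕ}
    (R : EuclideanSpace ℝ (Fin d) ≃ₗᵢ[ℝ] EuclideanSpace ℝ (Fin d))
    (x : Metric.sphere (0 : EuclideanSpace ℝ (Fin d)) 1) :
    Metric.sphere (0 : EuclideanSpace ℝ (Fin d)) 1 :=
  ⟨R x, by
    have hx : ‖(x : EuclideanSpace ℝ (Fin d))‖ = 1 := mem_sphere_zero_iff_norm.mp x.2
    simp [mem_sphere_zero_iff_norm, R.norm_map, hx]⟩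

/-!
Write `k` for the kernel, `c` for its constant `σ`-potential and `P y = ∑ i, k (u i) y` for the
potential of a minimizer `u` of `n` points. Moving one point of `u` does not decrease the energy,
and since `log` is concave the change is at most the first variation, up to `O(1 / n)`. Comparing
the points of largest and of smallest potential shows that these potentials differ by `O(1)`;
moving a point to a place where the first variation is at most its `σ`-mean then bounds all of them
by `n c + O(1)`. Hence the quadratic energy of the empirical measure is at most `c + O(1 / n)`.

On the sphere `k` is the Gaussian kernel `exp (-α ‖x - y‖ ^ 2 / 2)`, so `k x y = ⟪Φ x, Φ y⟫` for
a feature map `Φ` into a Hilbert space. As the `σ`-potential is constant, the excess of the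
quadratic energy over `c` is `‖∫ Φ dμ_n - ∫ Φ dσ‖ ^ 2`, which therefore tends to zero. This gives
convergence of `∫ ⟪h, Φ x⟫ dμ_n` for every `h`, in particular for the functions `exp ⟪v, x⟫`; they
are closed under products, so by Stone–Weierstrass their span is dense in `C(S)`.
-/

open ProbabilityTheory

lemma log_le_log_add_sub_div {a b : ℝ} (ha : 0 < a) (hb : 0 < b) :
    Real.log b ≤ Real.log a + (b - a) / a := by
  have h := Real.log_le_sub_one_of_pos (div_pos hb ha)
  rw [Real.log_div hb.ne' ha.ne', ← div_self ha.ne', ← sub_div] at h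
  linarith

lemma log_le_log_add_one_div {a b r : ℝ} (hr : 0 < r) (hra : r ≤ a) (hb : 0 < b)
    (hba : b ≤ a + 1) : Real.log b ≤ Real.log a + 1 / r :=
  have ha : 0 < a := hr.trans_le hra
  calc Real.log b ≤ Real.log a + (b - a) / a := log_le_log_add_sub_div ha hb
    _ ≤ Real.log a + 1 / r := by
      gcongr
      linarith

section Potential

variable {ι X : Type*} [Fintype ι]

/-- The potential generated at `y` by the configuration `u` under the kernel `k`, with the
charges not normalized: each point of `u` has mass one. -/
def potential (k : X → X → ℝ) (u : ι → X) (y : X) : ℝ :=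
  ∑ i, k (u i) y

/-- The energy `L(u) = ∑ i, log (1 + ∑_{j ≠ i} k (u j) (u i))` of the configuration `u`. -/
noncomputable def logEnergy [DecidableEq ι] (k : X → X → ℝ) (u : ι → X) : ℝ :=
  ∑ i, Real.log (1 + ∑ j ∈ Finset.univ.erase i, k (u j) (u i))

variable {k : X → X → ℝ} {δ : ℝ}

lemma logEnergy_eq_sum_log_potential [DecidableEq ι] (hdiag : ∀ x, k x x = 1) (u : ι → X) :
    logEnergy k u = ∑ i, Real.log (potential k u (u i)) := by
  refine Finset.sum_congr rfl fun i _ => ?_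
  rw [potential, ← Finset.add_sum_erase _ _ (Finset.mem_univ i), hdiag]

lemma card_mul_le_potential (hlow : ∀ x y, δ ≤ k x y) (u : ι → X) (y : X) :
    Fintype.card ι * δ ≤ potential k u y := by
  simpa [potential] using Finset.card_nsmul_le_sum Finset.univ _ δ fun i _ => hlow (u i) y

lemma potential_le_card (hup : ∀ x y, k x y ≤ 1) (u : ι → X) (y : X) :
    potential k u y ≤ Fintype.card ι := by
  simpa [potential] using Finset.sum_le_card_nsmul Finset.univ _ 1 fun i _ => hup (u i) y

lemma potential_pos [Nonempty ι] (hpos : ∀ x y, 0 < k x y) (u : ι → X) (y : X) :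
    0 < potential k u y :=
  Finset.sum_pos (fun _ _ => hpos _ _) Finset.univ_nonempty

lemma potential_update [DecidableEq ι] (u : ι → X) (j : ι) (x y : X) :
    potential k (Function.update u j x) y = potential k u y + k x y - k (u j) y := by
  have hrest : ∑ i ∈ Finset.univ.erase j, k (Function.update u j x i) y =
      ∑ i ∈ Finset.univ.erase j, k (u i) y :=
    Finset.sum_congr rfl fun i hi => by rw [Function.update_of_ne (Finset.ne_of_mem_erase hi)]
  rw [potential, potential, ← Finset.add_sum_erase _ _ (Finset.mem_univ j), hrest,
    Function.update_self, ← Finset.add_sum_erase _ (fun i => k (u i) y) (Finset.mem_univ j)]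
  ring

lemma logEnergy_update_add_log_potential [DecidableEq ι] (hdiag : ∀ x, k x x = 1)
    (u : ι → X) (j : ι) (x : X) :
    logEnergy k (Function.update u j x) + Real.log (potential k (Function.update u j x) (u j)) =
      ∑ i, Real.log (potential k (Function.update u j x) (u i)) +
        Real.log (potential k (Function.update u j x) x) := by
  set v := Function.update u j x
  have hrest : ∑ i ∈ Finset.univ.erase j, Real.log (potential k v (v i)) =
      ∑ i ∈ Finset.univ.erase j, Real.log (potential k v (u i)) :=
    Finset.sum_congr rfl fun i hi => by
      rw [show v i = u i from Function.update_of_ne (Finset.ne_of_mem_erase hi) ..]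
  rw [logEnergy_eq_sum_log_potential hdiag, ← Finset.add_sum_erase _ _ (Finset.mem_univ j), hrest,
    ← Finset.add_sum_erase _ (fun i => Real.log (potential k v (u i))) (Finset.mem_univ j),
    show v j = x from Function.update_self ..]
  ring

end Potential

section FirstVariation

variable {ι X : Type*} [Fintype ι] {k : X → X → ℝ} {u : ι → X} {δ c : ℝ}

lemma sum_log_potential_update_le [DecidableEq ι] (hpos : ∀ x y, 0 < k x y) (u : ι → X)
    (j : ι) (x : X) :
    ∑ i, Real.log (potential k (Function.update u j x) (u i)) ≤
      ∑ i, Real.log (potential k u (u i)) + ∑ i, k x (u i) / potential k u (u i) -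
        ∑ i, k (u j) (u i) / potential k u (u i) := by
  have : Nonempty ι := ⟨j⟩
  rw [← Finset.sum_add_distrib, ← Finset.sum_sub_distrib]
  refine Finset.sum_le_sum fun i _ => ?_
  refine (log_le_log_add_sub_div (potential_pos hpos u (u i)) (potential_pos hpos _ _)).trans_eq ?_
  rw [potential_update]
  ring

/- Concavity of `log` bounds the change of energy when `u j` moves to `x` by its first variation;
the two terms in which `u j` and `x` see themselves contribute the error. -/
lemma log_potential_add_sum_div_le_of_forall_logEnergy_le [DecidableEq ι] (hδ : 0 < δ)
    (hdiag : ∀ x, k x x = 1) (hlow : ∀ x y, δ ≤ k x y)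
    (hmin : ∀ w : ι → X, logEnergy k u ≤ logEnergy k w) (j : ι) (x : X) :
    Real.log (potential k u (u j)) + ∑ i, k (u j) (u i) / potential k u (u i) ≤
      Real.log (potential k u x) + ∑ i, k x (u i) / potential k u (u i) +
        2 / (Fintype.card ι * δ) := by
  have : Nonempty ι := ⟨j⟩
  have hpos : ∀ y z, 0 < k y z := fun y z => hδ.trans_le (hlow y z)
  have hr : 0 < Fintype.card ι * δ := by positivity
  set v := Function.update u j x with hv
  have hself : Real.log (potential k u (u j)) ≤
      Real.log (potential k v (u j)) + 1 / (Fintype.card ι * δ) := by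
    refine log_le_log_add_one_div hr (card_mul_le_potential hlow v _) (potential_pos hpos u _) ?_
    rw [hv, potential_update, hdiag]
    linarith [hpos x (u j)]
  have hmoved : Real.log (potential k v x) ≤
      Real.log (potential k u x) + 1 / (Fintype.card ι * δ) := by
    refine log_le_log_add_one_div hr (card_mul_le_potential hlow u _) (potential_pos hpos v _) ?_
    rw [hv, potential_update, hdiag]
    linarith [hpos (u j) x]
  have herr : 2 / (Fintype.card ι * δ) = 1 / (Fintype.card ι * δ) + 1 / (Fintype.card ι * δ) := by
    ring
  have hle := hmin v
  have hswap := logEnergy_update_add_log_potential hdiag u j x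
  rw [logEnergy_eq_sum_log_potential hdiag] at hle
  linarith [sum_log_potential_update_le hpos u j x]

lemma sum_kernel_div_potential_le_one (hsymm : ∀ x y, k x y = k y x) (hpos : ∀ x y, 0 < k x y)
    {a : ι} (ha : ∀ i, potential k u (u a) ≤ potential k u (u i)) :
    ∑ i, k (u a) (u i) / potential k u (u i) ≤ 1 := by
  have : Nonempty ι := ⟨a⟩
  have hP := potential_pos hpos u (u a)
  calc ∑ i, k (u a) (u i) / potential k u (u i)
      ≤ ∑ i, k (u i) (u a) / potential k u (u a) := by
        refine Finset.sum_le_sum fun i _ => ?_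
        rw [hsymm]
        exact div_le_div_of_nonneg_left (hpos _ _).le hP (ha i)
    _ = 1 := by rw [← Finset.sum_div, ← potential, div_self hP.ne']

lemma one_le_sum_kernel_div_potential (hsymm : ∀ x y, k x y = k y x) (hpos : ∀ x y, 0 < k x y)
    {b : ι} (hb : ∀ i, potential k u (u i) ≤ potential k u (u b)) :
    1 ≤ ∑ i, k (u b) (u i) / potential k u (u i) := by
  have : Nonempty ι := ⟨b⟩
  calc 1 = ∑ i, k (u i) (u b) / potential k u (u b) := by
        rw [← Finset.sum_div, ← potential, div_self (potential_pos hpos u (u b)).ne']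
    _ ≤ ∑ i, k (u b) (u i) / potential k u (u i) := by
        refine Finset.sum_le_sum fun i _ => ?_
        rw [hsymm]
        exact div_le_div_of_nonneg_left (hpos _ _).le (potential_pos hpos u _) (hb i)

lemma potential_le_potential_add_of_forall_logEnergy_le [DecidableEq ι] (hδ : 0 < δ)
    (hsymm : ∀ x y, k x y = k y x) (hdiag : ∀ x, k x x = 1) (hlow : ∀ x y, δ ≤ k x y)
    (hup : ∀ x y, k x y ≤ 1) (hmin : ∀ w : ι → X, logEnergy k u ≤ logEnergy k w)
    {a b : ι}
    (ha : ∀ i, potential k u (u a) ≤ potential k u (u i))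
    (hb : ∀ i, potential k u (u i) ≤ potential k u (u b)) :
    potential k u (u b) ≤ potential k u (u a) + 2 / δ := by
  have : Nonempty ι := ⟨a⟩
  have hpos : ∀ y z, 0 < k y z := fun y z => hδ.trans_le (hlow y z)
  set A := potential k u (u a)
  set B := potential k u (u b)
  have hA : 0 < A := potential_pos hpos u _
  have hB : 0 < B := potential_pos hpos u _
  have hlog : Real.log B ≤ Real.log A + 2 / (Fintype.card ι * δ) := by
    linarith [log_potential_add_sum_div_le_of_forall_logEnergy_le hδ hdiag hlow hmin b (u a),
      sum_kernel_div_potential_le_one hsymm hpos ha, one_le_sum_kernel_div_potential hsymm hpos hb]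
  have hrel : (B - A) / B ≤ 2 / (Fintype.card ι * δ) := by
    have h := log_le_log_add_sub_div hB hA
    rw [← neg_sub, neg_div] at h
    linarith
  calc B ≤ A + 2 / (Fintype.card ι * δ) * B := sub_le_iff_le_add'.mp ((div_le_iff₀ hB).mp hrel)
    _ ≤ A + 2 / (Fintype.card ι * δ) * Fintype.card ι := by
      gcongr
      exact potential_le_card hup u _
    _ = A + 2 / δ := by field_simp

variable [MeasurableSpace X] {σ : Measure X} [IsProbabilityMeasure σ]

lemma exists_sum_mul_kernel_le (hint : ∀ y, Integrable (k y) σ) (hpot : ∀ y, ∫ x, k y x ∂σ = c)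
    (q : ι → ℝ) (u : ι → X) : ∃ x, ∑ i, q i * k (u i) x ≤ (∑ i, q i) * c := by
  have hq : ∀ i ∈ Finset.univ, Integrable (fun x => q i * k (u i) x) σ :=
    fun i _ => (hint _).const_mul _
  obtain ⟨x, hx⟩ := exists_le_integral (integrable_finsetSum _ hq)
  refine ⟨x, hx.trans_eq ?_⟩
  simp only [integral_finsetSum _ hq, integral_const_mul, hpot, Finset.sum_mul]

/- `log t ≤ log (n c) + t / (n c) - 1` makes the first variation at `x` affine in `x ↦ k (u i) x`,
so it is at most its `σ`-mean somewhere. -/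
lemma exists_log_potential_add_sum_div_le [Nonempty ι] (hc : 0 < c)
    (hsymm : ∀ x y, k x y = k y x) (hpos : ∀ x y, 0 < k x y)
    (hint : ∀ y, Integrable (k y) σ) (hpot : ∀ y, ∫ x, k y x ∂σ = c) {m : ℝ} (hm : 0 < m)
    (hmu : ∀ i, m ≤ potential k u (u i)) :
    ∃ x, Real.log (potential k u x) + ∑ i, k x (u i) / potential k u (u i) ≤
      Real.log (Fintype.card ι * c) + Fintype.card ι * c / m := by
  have hnc : 0 < Fintype.card ι * c := by positivity
  obtain ⟨x, hx⟩ := exists_sum_mul_kernel_le hint hpot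
    (fun i => 1 / (Fintype.card ι * c) + 1 / potential k u (u i)) u
  refine ⟨x, ?_⟩
  have hlog := log_le_log_add_sub_div hnc (potential_pos hpos u x)
  rw [sub_div, div_self hnc.ne'] at hlog
  have hsum : ∑ i, (1 / (Fintype.card ι * c) + 1 / potential k u (u i)) * k (u i) x =
      potential k u x / (Fintype.card ι * c) + ∑ i, k x (u i) / potential k u (u i) := by
    rw [potential, Finset.sum_div, ← Finset.sum_add_distrib]
    refine Finset.sum_congr rfl fun i _ => ?_
    rw [hsymm x]
    ring
  have hmean : (∑ i, (1 / (Fintype.card ι * c) + 1 / potential k u (u i))) * c ≤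
      1 + Fintype.card ι * c / m :=
    calc (∑ i, (1 / (Fintype.card ι * c) + 1 / potential k u (u i))) * c
        ≤ (∑ _i : ι, (1 / (Fintype.card ι * c) + 1 / m)) * c := by
          gcongr with i
          exact hmu i
      _ = 1 + Fintype.card ι * c / m := by
          simp only [Finset.sum_const, Finset.card_univ, nsmul_eq_mul]
          field_simp
  linarith

lemma potential_le_of_forall_logEnergy_le [DecidableEq ι] (hδ : 0 < δ)
    (hsymm : ∀ x y, k x y = k y x) (hdiag : ∀ x, k x x = 1) (hlow : ∀ x y, δ ≤ k x y)
    (hup : ∀ x y, k x y ≤ 1) (hint : ∀ y, Integrable (k y) σ) (hpot : ∀ y, ∫ x, k y x ∂σ = c)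
    (hmin : ∀ w : ι → X, logEnergy k u ≤ logEnergy k w) (j : ι) :
    potential k u (u j) ≤ Fintype.card ι * c + 3 / δ := by
  have : Nonempty ι := ⟨j⟩
  have hpos : ∀ y z, 0 < k y z := fun y z => hδ.trans_le (hlow y z)
  have hc : 0 < c := by
    rw [← hpot (u j)]
    refine hδ.trans_le ?_
    simpa using integral_mono (integrable_const δ) (hint (u j)) (hlow (u j))
  obtain ⟨a, ha⟩ := Finite.exists_min fun i => potential k u (u i)
  obtain ⟨b, hb⟩ := Finite.exists_max fun i => potential k u (u i)
  set A := potential k u (u a)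
  set B := potential k u (u b)
  have hA : 0 < A := potential_pos hpos u _
  obtain ⟨x, hx⟩ := exists_log_potential_add_sum_div_le hc hsymm hpos hint hpot hA ha
  have hlog : Real.log A + 1 ≤ Real.log (Fintype.card ι * c) + Fintype.card ι * c / A +
      2 / (Fintype.card ι * δ) := by
    linarith [log_potential_add_sum_div_le_of_forall_logEnergy_le hδ hdiag hlow hmin b x,
      one_le_sum_kernel_div_potential hsymm hpos hb, Real.log_le_log hA (ha b)]
  have hrel : (A - Fintype.card ι * c) / A ≤ 1 / (Fintype.card ι * δ) := by
    have h := log_le_log_add_sub_div hA (by positivity : 0 < Fintype.card ι * c)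
    have herr : 2 / (Fintype.card ι * δ) = 2 * (1 / (Fintype.card ι * δ)) := by ring
    rw [sub_div, div_self hA.ne'] at h ⊢
    linarith
  have hAle : A ≤ Fintype.card ι * c + 1 / δ :=
    calc A ≤ Fintype.card ι * c + 1 / (Fintype.card ι * δ) * A :=
        sub_le_iff_le_add'.mp ((div_le_iff₀ hA).mp hrel)
      _ ≤ Fintype.card ι * c + 1 / (Fintype.card ι * δ) * Fintype.card ι := by
        gcongr
        exact potential_le_card hup u _
      _ = Fintype.card ι * c + 1 / δ := by field_simp
  have hspread := potential_le_potential_add_of_forall_logEnergy_le hδ hsymm hdiag hlow hup hmin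
    ha hb
  calc potential k u (u j) ≤ B := hb j
    _ ≤ Fintype.card ι * c + 1 / δ + 2 / δ := hspread.trans (by gcongr)
    _ = Fintype.card ι * c + 3 / δ := by ring

end FirstVariation

section EmpiricalMeasure

variable {X : Type*} [MeasurableSpace X]

/-- The empirical measure `(1 / n) ∑ i, δ_{u i}` of a configuration of `n` points; it is the zero
measure when `n = 0`. -/
noncomputable def empiricalMeasure {n : ℕ} (u : Fin n → X) : Measure X :=
  (n : ℝ≥0∞)⁻¹ • ∑ i : Fin n, Measure.dirac (u i)

variable {n : ℕ} {u : Fin n → X}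

lemma isProbabilityMeasure_empiricalMeasure (hn : n ≠ 0) (u : Fin n → X) :
    IsProbabilityMeasure (empiricalMeasure u) := by
  constructor
  simpa [empiricalMeasure] using ENNReal.inv_mul_cancel (by exact_mod_cast hn) (by simp)

instance : IsZeroOrProbabilityMeasure (empiricalMeasure u) := by
  rcases eq_or_ne n 0 with rfl | hn
  · simpa [empiricalMeasure] using inferInstanceAs (IsZeroOrProbabilityMeasure (0 : Measure X))
  · have := isProbabilityMeasure_empiricalMeasure hn u
    infer_instance

lemma integral_empiricalMeasure [MeasurableSingletonClass X] {F : Type*} [NormedAddCommGroup F]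
    [NormedSpace ℝ F] [CompleteSpace F] (u : Fin n → X) (f : X → F) :
    ∫ x, f x ∂empiricalMeasure u = (n : ℝ)⁻¹ • ∑ i, f (u i) := by
  rw [empiricalMeasure, integral_smul_measure,
    integral_finsetSum_measure fun i _ => integrable_dirac (by simp)]
  simp

lemma integral_integral_empiricalMeasure_le_of_forall_logEnergy_le [MeasurableSingletonClass X]
    {σ : Measure X} [IsProbabilityMeasure σ] {k : X → X → ℝ} {δ c : ℝ} (hδ : 0 < δ)
    (hsymm : ∀ x y, k x y = k y x) (hdiag : ∀ x, k x x = 1) (hlow : ∀ x y, δ ≤ k x y)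
    (hup : ∀ x y, k x y ≤ 1) (hint : ∀ y, Integrable (k y) σ) (hpot : ∀ y, ∫ x, k y x ∂σ = c)
    (hn : n ≠ 0) (hmin : ∀ w : Fin n → X, logEnergy k u ≤ logEnergy k w) :
    ∫ y, ∫ x, k y x ∂empiricalMeasure u ∂empiricalMeasure u ≤ c + 3 / δ * (n : ℝ)⁻¹ := by
  have hpotential : ∀ y, ∑ i, k y (u i) = potential k u y := fun y =>
    Finset.sum_congr rfl fun i _ => hsymm y (u i)
  simp only [integral_empiricalMeasure, smul_eq_mul, hpotential]
  calc (n : ℝ)⁻¹ * ∑ j, (n : ℝ)⁻¹ * potential k u (u j)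
      ≤ (n : ℝ)⁻¹ * ∑ _j : Fin n, (n : ℝ)⁻¹ * (n * c + 3 / δ) := by
        gcongr with j
        simpa using potential_le_of_forall_logEnergy_le hδ hsymm hdiag hlow hup hint hpot hmin j
    _ = c + 3 / δ * (n : ℝ)⁻¹ := by
        simp only [Finset.sum_const, Finset.card_univ, Fintype.card_fin, nsmul_eq_mul]
        field_simp

end EmpiricalMeasure

lemma tendsto_integral_of_dense {ι X : Type*} [TopologicalSpace X] [CompactSpace X]
    [MeasurableSpace X] [BorelSpace X] {l : Filter ι} {μ : ι → Measure X}
    [∀ i, IsZeroOrProbabilityMeasure (μ i)] {σ : Measure X} [IsFiniteMeasure σ]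
    {S : Set C(X, ℝ)} (hS : Dense S)
    (h : ∀ g ∈ S, Tendsto (fun i => ∫ x, g x ∂μ i) l (𝓝 (∫ x, g x ∂σ))) (f : C(X, ℝ)) :
    Tendsto (fun i => ∫ x, f x ∂μ i) l (𝓝 (∫ x, f x ∂σ)) := by
  have hint : ∀ (ν : Measure X) [IsFiniteMeasure ν] (g : C(X, ℝ)), Integrable g ν := fun ν _ g =>
    g.continuous.integrable_of_hasCompactSupport (.of_compactSpace _)
  have hlip : ∀ (ν : Measure X) [IsFiniteMeasure ν],
      LipschitzWith (measureUnivNNReal ν) fun g : C(X, ℝ) => ∫ x, g x ∂ν := fun ν _ =>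
    LipschitzWith.of_dist_le_mul fun g₁ g₂ => by
      rw [dist_eq_norm, ← integral_sub (hint ν g₁) (hint ν g₂), mul_comm]
      exact norm_integral_le_of_norm_le_const (ae_of_all _ fun x => by
        simpa [dist_eq_norm] using ContinuousMap.dist_apply_le_dist (f := g₁) (g := g₂) x)
  have hequi : Equicontinuous fun i => fun g : C(X, ℝ) => ∫ x, g x ∂μ i :=
    (LipschitzWith.uniformEquicontinuous _ 1 fun i => (hlip (μ i)).weaken (by
      simpa [measureUnivNNReal] using ENNReal.toNNReal_mono ENNReal.one_ne_top
        (prob_le_one (μ := μ i) (s := Set.univ)))).equicontinuous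
  have hclosed := hequi.isClosed_setOfPred_tendsto (l := l) (hlip σ).continuous
  exact hclosed.closure_subset_iff.mpr h (hS f)

section FeatureMap

variable {X H : Type*} [NormedAddCommGroup H] [InnerProductSpace ℝ H]

lemma continuous_of_continuous_inner [TopologicalSpace X] {Φ : X → H}
    (h : Continuous fun p : X × X => ⟪Φ p.1, Φ p.2⟫) : Continuous Φ := by
  refine continuous_iff_continuousAt.mpr fun x => tendsto_iff_norm_sub_tendsto_zero.mpr ?_
  have hnorm : ∀ y, ‖Φ y - Φ x‖ = √(⟪Φ y, Φ y⟫ - 2 * ⟪Φ y, Φ x⟫ + ⟪Φ x, Φ x⟫) := fun y => by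
    rw [real_inner_self_eq_norm_sq, real_inner_self_eq_norm_sq, ← norm_sub_sq_real,
      Real.sqrt_sq (norm_nonneg _)]
  have hdiag : Continuous fun y => ⟪Φ y, Φ y⟫ := h.comp (by fun_prop : Continuous fun y => (y, y))
  have hleft : Continuous fun y => ⟪Φ y, Φ x⟫ := h.comp (by fun_prop : Continuous fun y => (y, x))
  have hcont : Continuous fun y => ‖Φ y - Φ x‖ := by
    simp only [hnorm]
    fun_prop
  simpa using hcont.tendsto x

lemma norm_sq_integral_sub_integral [CompleteSpace H] [MeasurableSpace X] {Φ : X → H}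
    {μ σ : Measure X} [IsProbabilityMeasure μ] [IsProbabilityMeasure σ] {c : ℝ}
    (hμ : Integrable Φ μ) (hσ : Integrable Φ σ) (hpot : ∀ x, ∫ y, ⟪Φ x, Φ y⟫ ∂σ = c) :
    ‖∫ x, Φ x ∂μ - ∫ x, Φ x ∂σ‖ ^ 2 = ∫ x, ∫ y, ⟪Φ x, Φ y⟫ ∂μ ∂μ - c := by
  have hmean : ∀ x, ⟪Φ x, ∫ y, Φ y ∂σ⟫ = c := fun x => by rw [← integral_inner hσ, hpot]
  have hinner : ∀ (ν : Measure X) (m : H), Integrable Φ ν →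
      ⟪∫ x, Φ x ∂ν, m⟫ = ∫ x, ⟪Φ x, m⟫ ∂ν := fun ν m hν => by
    simp only [real_inner_comm m, integral_inner hν]
  rw [norm_sub_sq_real, ← real_inner_self_eq_norm_sq, ← real_inner_self_eq_norm_sq,
    hinner μ _ hμ, hinner μ _ hμ, hinner σ _ hσ]
  simp only [hmean, ← integral_inner hμ, integral_const, probReal_univ, one_smul]
  ring

/-- A feature map into a Hilbert space is universal if the functions of its reproducing kernel
Hilbert space, that is `x ↦ ⟪h, Φ x⟫`, are uniformly dense among the continuous ones. -/
def IsUniversalFeatureMap [TopologicalSpace X] [CompactSpace X] (Φ : X → H) : Prop :=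
  Dense {f : C(X, ℝ) | ∃ h : H, ∀ x, f x = ⟪h, Φ x⟫}

variable [TopologicalSpace X] [CompactSpace X] {Φ : X → H}

lemma exists_pos_forall_le_inner (hΦ : Continuous Φ) (hpos : ∀ x y, 0 < ⟪Φ x, Φ y⟫) :
    ∃ δ > 0, ∀ x y, δ ≤ ⟪Φ x, Φ y⟫ := by
  obtain ⟨δ, hδ, hle⟩ := isCompact_univ.exists_forall_le' (a := (0 : ℝ))
    (f := fun p : X × X => ⟪Φ p.1, Φ p.2⟫) (by fun_prop) fun p _ => hpos p.1 p.2
  exact ⟨δ, hδ, fun x y => hle (x, y) (Set.mem_univ _)⟩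

variable [CompleteSpace H] [MeasurableSpace X] [BorelSpace X]

lemma tendsto_integral_of_isUniversalFeatureMap (hΦ : Continuous Φ)
    (huniv : IsUniversalFeatureMap Φ) {ι : Type*} {l : Filter ι} {μ : ι → Measure X}
    [∀ i, IsZeroOrProbabilityMeasure (μ i)] {σ : Measure X} [IsFiniteMeasure σ]
    (hmean : Tendsto (fun i => ∫ x, Φ x ∂μ i) l (𝓝 (∫ x, Φ x ∂σ))) (f : C(X, ℝ)) :
    Tendsto (fun i => ∫ x, f x ∂μ i) l (𝓝 (∫ x, f x ∂σ)) := by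
  have hint : ∀ (ν : Measure X) [IsFiniteMeasure ν], Integrable Φ ν := fun ν _ =>
    hΦ.integrable_of_hasCompactSupport (.of_compactSpace _)
  refine tendsto_integral_of_dense huniv ?_ f
  rintro g ⟨h, hg⟩
  simp only [hg, integral_inner (hint _)]
  exact tendsto_const_nhds.inner hmean

theorem tendsto_integral_empiricalMeasure_of_forall_logEnergy_le [MeasurableSingletonClass X]
    (hΦ : Continuous Φ) (huniv : IsUniversalFeatureMap Φ) (hnorm : ∀ x, ‖Φ x‖ = 1)
    (hpos : ∀ x y, 0 < ⟪Φ x, Φ y⟫) {σ : Measure X} [IsProbabilityMeasure σ] {c : ℝ}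
    (hpot : ∀ x, ∫ y, ⟪Φ x, Φ y⟫ ∂σ = c) {u : (n : ℕ) → Fin n → X}
    (hmin : ∀ᶠ n in atTop, ∀ w : Fin n → X,
      logEnergy (fun x y => ⟪Φ x, Φ y⟫) (u n) ≤ logEnergy (fun x y => ⟪Φ x, Φ y⟫) w)
    (f : C(X, ℝ)) :
    Tendsto (fun n => ∫ x, f x ∂empiricalMeasure (u n)) atTop (𝓝 (∫ x, f x ∂σ)) := by
  have hint : ∀ (ν : Measure X) [IsFiniteMeasure ν], Integrable Φ ν := fun ν _ =>
    hΦ.integrable_of_hasCompactSupport (.of_compactSpace _)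
  obtain ⟨δ, hδ, hlow⟩ := exists_pos_forall_le_inner hΦ hpos
  refine tendsto_integral_of_isUniversalFeatureMap hΦ huniv
    (tendsto_iff_norm_sub_tendsto_zero.mpr ?_) f
  have hsq : Tendsto (fun n => ‖∫ x, Φ x ∂empiricalMeasure (u n) - ∫ x, Φ x ∂σ‖ ^ 2) atTop
      (𝓝 0) := by
    have hrate : Tendsto (fun n : ℕ => 3 / δ * (n : ℝ)⁻¹) atTop (𝓝 0) := by
      simpa using (tendsto_inv_atTop_nhds_zero_nat (𝕜 := ℝ)).const_mul (3 / δ)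
    refine squeeze_zero' (Eventually.of_forall fun n => by positivity) ?_ hrate
    filter_upwards [hmin, eventually_ne_atTop 0] with n hmin hn
    have := isProbabilityMeasure_empiricalMeasure hn (u n)
    rw [norm_sq_integral_sub_integral (hint _) (hint σ) hpot, sub_le_iff_le_add']
    exact integral_integral_empiricalMeasure_le_of_forall_logEnergy_le hδ
      (fun x y => real_inner_comm _ _) (fun x => by simp [hnorm]) hlow
      (fun x y => by simpa [hnorm] using real_inner_le_norm (Φ x) (Φ y))
      (fun y => (hint σ).const_inner _) hpot hn hmin
  simpa using hsq.sqrt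

end FeatureMap

section GaussianFeature

variable {E : Type*} [NormedAddCommGroup E] [InnerProductSpace ℝ E]

lemma exp_inner_sub_mul_exp_inner_sub (x y z : E) :
    Real.exp (⟪x, z⟫ - ‖x‖ ^ 2) * Real.exp (⟪y, z⟫ - ‖y‖ ^ 2) =
      Real.exp (-(‖x‖ ^ 2 + ‖y‖ ^ 2)) * Real.exp ⟪x + y, z⟫ := by
  rw [← Real.exp_add, ← Real.exp_add, inner_add_left]
  ring_nf

variable [FiniteDimensional ℝ E] [MeasurableSpace E] [BorelSpace E]

lemma integral_exp_inner_stdGaussian (t : E) :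
    ∫ z, Real.exp ⟪t, z⟫ ∂stdGaussian E = Real.exp (‖t‖ ^ 2 / 2) := by
  have hmap : (stdGaussian E).map (fun z => ⟪t, z⟫) = gaussianReal 0 (‖t‖ ^ 2).toNNReal := by
    have h := IsGaussian.map_eq_gaussianReal (μ := stdGaussian E) (innerSL ℝ t)
    rwa [integral_strongDual_stdGaussian, variance_dual_stdGaussian, innerSL_apply_norm] at h
  have h := mgf_gaussianReal hmap 1
  simpa [mgf] using h

lemma integrable_exp_inner_stdGaussian (t : E) :
    Integrable (fun z => Real.exp ⟪t, z⟫) (stdGaussian E) :=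
  .of_integral_ne_zero (integral_exp_inner_stdGaussian t ▸ (Real.exp_pos _).ne')

lemma memLp_exp_inner_sub (x : E) :
    MemLp (fun z => Real.exp (⟪x, z⟫ - ‖x‖ ^ 2)) 2 (stdGaussian E) := by
  refine (memLp_two_iff_integrable_sq (by fun_prop)).mpr ?_
  simp only [sq (Real.exp _), exp_inner_sub_mul_exp_inner_sub]
  exact (integrable_exp_inner_stdGaussian _).const_mul _

/-- The feature map `x ↦ exp (⟪x, ·⟫ - ‖x‖ ^ 2)` of the Gaussian kernel `exp (-‖x - y‖ ^ 2 / 2)`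
into the square integrable functions on `E` with its standard Gaussian measure. -/
noncomputable def gaussianFeature (x : E) : Lp ℝ 2 (stdGaussian E) :=
  (memLp_exp_inner_sub x).toLp

lemma inner_gaussianFeature (x y : E) :
    ⟪gaussianFeature x, gaussianFeature y⟫ = Real.exp (-‖x - y‖ ^ 2 / 2) := by
  have hcongr : (fun z => ⟪gaussianFeature x z, gaussianFeature y z⟫) =ᵐ[stdGaussian E]
      fun z => Real.exp (-(‖x‖ ^ 2 + ‖y‖ ^ 2)) * Real.exp ⟪x + y, z⟫ := by
    filter_upwards [(memLp_exp_inner_sub x).coeFn_toLp, (memLp_exp_inner_sub y).coeFn_toLp]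
      with z hx hy
    rw [gaussianFeature, gaussianFeature, hx, hy, ← exp_inner_sub_mul_exp_inner_sub]
    simp [mul_comm]
  rw [L2.inner_def, integral_congr_ae hcongr, integral_const_mul, integral_exp_inner_stdGaussian,
    ← Real.exp_add, norm_add_sq_real, norm_sub_sq_real]
  ring_nf

lemma norm_gaussianFeature (x : E) : ‖gaussianFeature x‖ = 1 := by
  rw [norm_eq_sqrt_real_inner, inner_gaussianFeature]
  simp

lemma continuous_gaussianFeature : Continuous (gaussianFeature : E → Lp ℝ 2 (stdGaussian E)) :=
  continuous_of_continuous_inner (by simp only [inner_gaussianFeature]; fun_prop)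

end GaussianFeature

section Sphere

variable {E : Type*} [NormedAddCommGroup E] [InnerProductSpace ℝ E]

lemma dense_span_exp_inner (s : Set E) [CompactSpace s] :
    Dense (Submodule.span ℝ {f : C(s, ℝ) | ∃ v : E, ∀ x, f x = Real.exp ⟪v, x⟫} :
      Set C(s, ℝ)) := by
  let M : Submonoid C(s, ℝ) :=
    { carrier := {f | ∃ v : E, ∀ x, f x = Real.exp ⟪v, x⟫}
      one_mem' := ⟨0, fun x => by simp⟩
      mul_mem' := by
        rintro f g ⟨v, hf⟩ ⟨w, hg⟩
        exact ⟨v + w, fun x => by simp [hf, hg, inner_add_left, Real.exp_add]⟩ }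
  have hspan : Subalgebra.toSubmodule (Algebra.adjoin ℝ (M : Set C(s, ℝ))) =
      Submodule.span ℝ (M : Set C(s, ℝ)) := by
    rw [Algebra.adjoin_eq_span, Submonoid.closure_eq]
  have hsep : (Algebra.adjoin ℝ (M : Set C(s, ℝ))).SeparatesPoints := by
    intro x y hxy
    let f : C(s, ℝ) := ⟨fun z => Real.exp ⟪(x - y : E), z⟫, by fun_prop⟩
    refine ⟨f, ⟨f, Algebra.subset_adjoin ⟨x - y, fun _ => rfl⟩, rfl⟩, fun h => hxy ?_⟩
    have hinner : ⟪(x - y : E), x⟫ = ⟪(x - y : E), y⟫ := Real.exp_injective h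
    rw [← sub_eq_zero, ← inner_sub_right, inner_self_eq_zero, sub_eq_zero] at hinner
    exact Subtype.ext hinner
  change Dense (Submodule.span ℝ (M : Set C(s, ℝ)) : Set C(s, ℝ))
  rw [← hspan]
  exact ContinuousMap.continuousMap_mem_subalgebra_closure_of_separatesPoints _ hsep

/-- The map induced on the unit sphere by a linear isometry of the ambient space. -/
def sphereMap (R : E ≃ₗᵢ[ℝ] E) : Metric.sphere (0 : E) 1 → Metric.sphere (0 : E) 1 :=
  Subtype.map R fun x hx => by simpa using hx

lemma continuous_sphereMap (R : E ≃ₗᵢ[ℝ] E) : Continuous (sphereMap R) :=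
  R.continuous.subtype_map _

variable [MeasurableSpace E] [BorelSpace E]

lemma integral_comp_inner_eq_of_map_sphereMap_eq {σ : Measure (Metric.sphere (0 : E) 1)}
    (hσ : ∀ R : E ≃ₗᵢ[ℝ] E, σ.map (sphereMap R) = σ) {g : ℝ → ℝ} (hg : Continuous g)
    (x y : Metric.sphere (0 : E) 1) :
    ∫ z : Metric.sphere (0 : E) 1, g ⟪(x : E), z⟫ ∂σ =
      ∫ z : Metric.sphere (0 : E) 1, g ⟪(y : E), z⟫ ∂σ := by
  set R := (ℝ ∙ ((x : E) - y))ᗮ.reflection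
  have hR : R x = y := Submodule.reflection_sub (by simp)
  have hcont : Continuous fun z : Metric.sphere (0 : E) 1 => g ⟪(y : E), z⟫ := by fun_prop
  calc ∫ z : Metric.sphere (0 : E) 1, g ⟪(x : E), z⟫ ∂σ
      = ∫ z, g ⟪(y : E), sphereMap R z⟫ ∂σ := by
        refine integral_congr_ae (ae_of_all _ fun z => ?_)
        change g ⟪(x : E), z⟫ = g ⟪(y : E), R z⟫
        rw [← hR, R.inner_map_map]
    _ = ∫ z : Metric.sphere (0 : E) 1, g ⟪(y : E), z⟫ ∂σ.map (sphereMap R) :=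
        (integral_map (continuous_sphereMap R).aemeasurable hcont.aestronglyMeasurable).symm
    _ = ∫ z : Metric.sphere (0 : E) 1, g ⟪(y : E), z⟫ ∂σ := by rw [hσ]

variable [FiniteDimensional ℝ E] {α : ℝ}

/-- The feature map of the kernel `exp (α * (⟪x, y⟫ - 1))` on the unit sphere, which there
coincides with the Gaussian kernel `exp (-α * ‖x - y‖ ^ 2 / 2)`. -/
noncomputable def sphereFeature (α : ℝ) (x : Metric.sphere (0 : E) 1) : Lp ℝ 2 (stdGaussian E) :=
  gaussianFeature (√α • (x : E))

lemma inner_sphereFeature (hα : 0 ≤ α) (x y : Metric.sphere (0 : E) 1) :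
    ⟪sphereFeature α x, sphereFeature α y⟫ = Real.exp (α * (⟪(x : E), y⟫ - 1)) := by
  rw [sphereFeature, sphereFeature, inner_gaussianFeature, ← smul_sub, norm_smul, mul_pow,
    norm_sub_sq_real, norm_eq_of_mem_sphere x, norm_eq_of_mem_sphere y, Real.norm_eq_abs, sq_abs,
    Real.sq_sqrt hα]
  ring_nf

lemma continuous_sphereFeature (α : ℝ) :
    Continuous (sphereFeature α : Metric.sphere (0 : E) 1 → Lp ℝ 2 (stdGaussian E)) :=
  continuous_gaussianFeature.comp (by fun_prop)

lemma exists_exp_inner_eq_inner_sphereFeature (hα : 0 < α) (v : E) :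
    ∃ h : Lp ℝ 2 (stdGaussian E), ∀ x : Metric.sphere (0 : E) 1,
      Real.exp ⟪v, x⟫ = ⟪h, sphereFeature α x⟫ := by
  have hα' : √α ≠ 0 := (Real.sqrt_pos.mpr hα).ne'
  set w := (√α)⁻¹ • v with hw
  refine ⟨Real.exp ((‖w‖ ^ 2 + α) / 2) • gaussianFeature w, fun x => ?_⟩
  have hinner : ⟪w, √α • (x : E)⟫ = ⟪v, (x : E)⟫ := by
    rw [hw, real_inner_smul_left, real_inner_smul_right, inv_mul_cancel_left₀ hα']
  have hnorm : ‖√α • (x : E)‖ ^ 2 = α := by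
    rw [norm_smul, norm_eq_of_mem_sphere x, mul_one, Real.norm_eq_abs, sq_abs, Real.sq_sqrt hα.le]
  rw [real_inner_smul_left, sphereFeature, inner_gaussianFeature, ← Real.exp_add, norm_sub_sq_real,
    hinner, hnorm]
  ring_nf

lemma isUniversalFeatureMap_sphereFeature (hα : 0 < α) :
    IsUniversalFeatureMap (sphereFeature (E := E) α) := by
  refine (dense_span_exp_inner (Metric.sphere (0 : E) 1)).mono fun f hf => ?_
  induction hf using Submodule.span_induction with
  | mem f hf =>
    obtain ⟨v, hv⟩ := hf
    obtain ⟨h, hh⟩ := exists_exp_inner_eq_inner_sphereFeature hα v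
    exact ⟨h, fun x => (hv x).trans (hh x)⟩
  | zero => exact ⟨0, fun x => by simp⟩
  | add f g _ _ hf hg =>
    obtain ⟨⟨a, ha⟩, ⟨b, hb⟩⟩ := And.intro hf hg
    exact ⟨a + b, fun x => by simp [ha, hb, inner_add_left]⟩
  | smul r f _ hf =>
    obtain ⟨a, ha⟩ := hf
    exact ⟨r • a, fun x => by simp [ha, real_inner_smul_left]⟩

theorem empirical_minimizers_tendsto_uniform_general (hα : 0 < α)
    {σ : Measure (Metric.sphere (0 : E) 1)} [IsProbabilityMeasure σ]
    (hσ : ∀ R : E ≃ₗᵢ[ℝ] E, σ.map (sphereMap R) = σ)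
    {u : (n : ℕ) → Fin n → Metric.sphere (0 : E) 1}
    (hmin : ∀ᶠ n in atTop, ∀ w : Fin n → Metric.sphere (0 : E) 1,
      logEnergy (fun x y : Metric.sphere (0 : E) 1 => Real.exp (α * (⟪(x : E), y⟫ - 1))) (u n) ≤
        logEnergy (fun x y : Metric.sphere (0 : E) 1 => Real.exp (α * (⟪(x : E), y⟫ - 1))) w)
    (f : C(Metric.sphere (0 : E) 1, ℝ)) :
    Tendsto (fun n => ∫ x, f x ∂empiricalMeasure (u n)) atTop (𝓝 (∫ x, f x ∂σ)) := by
  have hnorm : ∀ x : Metric.sphere (0 : E) 1, ‖sphereFeature α x‖ = 1 := fun x =>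
    norm_gaussianFeature _
  have hpot : ∀ x : Metric.sphere (0 : E) 1,
      ∫ y, ⟪sphereFeature α x, sphereFeature α y⟫ ∂σ =
        ∫ y, ⟪sphereFeature α (u 1 0), sphereFeature α y⟫ ∂σ := fun x => by
    simp only [inner_sphereFeature hα.le]
    exact integral_comp_inner_eq_of_map_sphereMap_eq hσ (g := fun t => Real.exp (α * (t - 1)))
      (by fun_prop) x (u 1 0)
  refine tendsto_integral_empiricalMeasure_of_forall_logEnergy_le (continuous_sphereFeature α)
    (isUniversalFeatureMap_sphereFeature hα) hnorm (fun x y => ?_) hpot ?_ f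
  · simpa only [inner_sphereFeature hα.le] using Real.exp_pos _
  · simpa only [inner_sphereFeature hα.le] using hmin

end Sphere

/-- Let `σ` be the uniform (rotation-invariant) probability measure on the
unit sphere `S ⊂ ℝ^d`, `d ≥ 2`, and `α > 0`. If for each `n ≥ 1` the tuple
`u n : Fin n → S` is a global minimizer of
`L_α(w) = ∑ i, log (1 + ∑_{j ≠ i} exp (α (⟪w j, w i⟫ - 1)))` over `Sⁿ`, then the empirical
measures `μ_n = (1/n) ∑ i, δ_{u n i}` converge weakly to `σ`. -/
theorem empirical_minimizers_tendsto_uniform (d : ℕ) (hd : 2 ≤ d) (α : ℝ) (hα : 0 < α)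
    (σ : Measure (Metric.sphere (0 : EuclideanSpace ℝ (Fin d)) 1))
    (hσprob : IsProbabilityMeasure σ)
    (hσinv : ∀ R : EuclideanSpace ℝ (Fin d) ≃ₗᵢ[ℝ] EuclideanSpace ℝ (Fin d),
      Measure.map (sphereRot R) σ = σ)
    (u : (n : ℕ) → Fin n → Metric.sphere (0 : EuclideanSpace ℝ (Fin d)) 1)
    (hmin : ∀ n : ℕ, 1 ≤ n →
      ∀ w : Fin n → Metric.sphere (0 : EuclideanSpace ℝ (Fin d)) 1,
        (∑ i, Real.log (1 + ∑ j ∈ Finset.univ.erase i,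
          Real.exp (α * (⟪(u n j : EuclideanSpace ℝ (Fin d)),
            (u n i : EuclideanSpace ℝ (Fin d))⟫ - 1)))) ≤
        ∑ i, Real.log (1 + ∑ j ∈ Finset.univ.erase i,
          Real.exp (α * (⟪(w j : EuclideanSpace ℝ (Fin d)),
            (w i : EuclideanSpace ℝ (Fin d))⟫ - 1)))) :
    ∀ f : BoundedContinuousFunction (Metric.sphere (0 : EuclideanSpace ℝ (Fin d)) 1) ℝ,
      Tendsto (fun n : ℕ =>
          ∫ x, f x ∂((n : ℝ≥0∞)⁻¹ • ∑ i : Fin n, Measure.dirac (u n i)))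
        atTop (𝓝 (∫ x, f x ∂σ)) :=
  fun f => empirical_minimizers_tendsto_uniform_general hα hσinv
    ((eventually_ge_atTop 1).mono hmin) f.toContinuousMap
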